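/- Let G be the CPDAG of the Markov equivalence class of a DAG, and let X and Y be distinct nodes that are adjacent in G. If Y ∈ Pa_G(X), then X is not a possible ancestor of Y in G. Consequently, for adjacent X and Y, X is a possible ancestor of Y in G if and only if Y ∈ Ch_G(X) ∪ Sib_G(X). -/

import Mathlib

/-- A directed acyclic graph on node set `V`: a directed edge relation with no
directed cycles (no edge `a → b` together with a directed path from `b` back to `a`). -/
structure Dag (V : Type*) where
  edge : V → V → Prop
  acyclic : ∀ a b : V, edge a b → ¬ Relation.ReflTransGen edge b a

variable {V : Type*}

namespace Dag

/-- `a` is an ancestor of `b` (equivalently, `b` is a descendant of `a`):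
there is a directed path from `a` to `b`; every node is its own ancestor. -/
def Anc (D : Dag V) (a b : V) : Prop := Relation.ReflTransGen D.edge a b

/-- `a` and `b` are adjacent (joined by an edge in either direction). -/
def Adj (D : Dag V) (a b : V) : Prop := D.edge a b ∨ D.edge b a

/-- The parents of `x` in the DAG `D`. -/
def Pa (D : Dag V) (x : V) : Set V := {a | D.edge a x}

/-- The Markov blanket of `x`: parents, children, and parents of children of `x`
(excluding `x` itself). -/
def MB (D : Dag V) (x : V) : Set V :=
  {v | v ≠ x ∧ (D.edge v x ∨ D.edge x v ∨ ∃ c : V, D.edge x c ∧ D.edge v c)}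

end Dag

/-- A path between `x` and `y` with respect to an adjacency relation `A`:
a sequence of distinct nodes, starting at `x` and ending at `y`, in which
consecutive nodes are adjacent. `n` is the number of edges of the path. -/
structure GPath (A : V → V → Prop) (x y : V) where
  n : ℕ
  f : Fin (n + 1) → V
  inj : Function.Injective f
  first : f ⟨0, by omega⟩ = x
  last : f ⟨n, by omega⟩ = y
  adj : ∀ i : Fin n, A (f i.castSucc) (f i.succ)

namespace GPath

/-- The non-endpoint node at position `i` of the path `p` is a collider with respect
to the directed edge relation `E`: both incident edges of the path point into it. -/
def ColliderAt {A : V → V → Prop} {x y : V} (p : GPath A x y)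
    (E : V → V → Prop) (i : ℕ) : Prop :=
  ∃ (_ : 0 < i) (_ : i < p.n),
    E (p.f ⟨i - 1, by omega⟩) (p.f ⟨i, by omega⟩) ∧
    E (p.f ⟨i + 1, by omega⟩) (p.f ⟨i, by omega⟩)

/-- The path `p` is blocked by the node set `S` in the DAG `D`: it contains a
non-collider that lies in `S`, or a collider such that neither the collider nor any
of its descendants lies in `S`. -/
def Blocked {A : V → V → Prop} {x y : V} (p : GPath A x y)
    (D : Dag V) (S : Set V) : Prop :=
  ∃ (i : ℕ) (_ : 0 < i) (_ : i < p.n),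
    (¬ p.ColliderAt D.edge i ∧ p.f ⟨i, by omega⟩ ∈ S) ∨
    (p.ColliderAt D.edge i ∧ ∀ d : V, D.Anc (p.f ⟨i, by omega⟩) d → d ∉ S)

end GPath

namespace Dag

/-- `x` and `y` are d-separated by `S` in the DAG `D`: every path between `x` and `y`
is blocked by `S`. -/
def dSep (D : Dag V) (x y : V) (S : Set V) : Prop :=
  ∀ p : GPath D.Adj x y, p.Blocked D S

/-- Two DAGs on the same node set are Markov equivalent if they have exactly the same
d-separation relations. -/
def MEquiv (D D' : Dag V) : Prop :=
  ∀ (x y : V) (S : Set V), D.dSep x y S ↔ D'.dSep x y S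

/-- The edge between `a` and `b` is directed `a → b` in the CPDAG of the Markov
equivalence class of `D`: the edge `a → b` holds in every DAG Markov equivalent to `D`. -/
def CpDir (D : Dag V) (a b : V) : Prop :=
  ∀ D' : Dag V, D.MEquiv D' → D'.edge a b

/-- The edge between `a` and `b` is undirected (`a − b`) in the CPDAG: `a` and `b` are
adjacent (the CPDAG has the same adjacencies as the DAGs of the MEC) but the edge is not
directed either way in the CPDAG. -/
def CpUndir (D : Dag V) (a b : V) : Prop :=
  D.Adj a b ∧ ¬ D.CpDir a b ∧ ¬ D.CpDir b a

/-- `Pa_G(a)`: the nodes with a directed edge into `a` in the CPDAG. -/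
def CpPa (D : Dag V) (a : V) : Set V := {p | D.CpDir p a}

/-- `Ch_G(a)`: the nodes `b` with the edge directed `a → b` in the CPDAG. -/
def CpCh (D : Dag V) (a : V) : Set V := {c | D.CpDir a c}

/-- `Sib_G(a)`: the nodes joined to `a` by an undirected edge in the CPDAG. -/
def CpSib (D : Dag V) (a : V) : Set V := {s | D.CpUndir a s}

end Dag

namespace GPath

/-- `p` is a possibly directed path in the CPDAG: no edge on it is directed
backwards (as `V_i ← V_{i+1}`) in the CPDAG. -/
def CpPossiblyDirected {D : Dag V} {x y : V} (p : GPath D.Adj x y) : Prop :=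
  ∀ i : Fin p.n, ¬ D.CpDir (p.f i.succ) (p.f i.castSucc)

/-- `p` is a (fully) directed path in the CPDAG: every edge on it is directed
forwards in the CPDAG. -/
def CpDirected {D : Dag V} {x y : V} (p : GPath D.Adj x y) : Prop :=
  ∀ i : Fin p.n, D.CpDir (p.f i.castSucc) (p.f i.succ)

/-- `p` is a directed path from `x` to `y` in the DAG `D` itself. -/
def DirectedIn {D : Dag V} {x y : V} (p : GPath D.Adj x y) : Prop :=
  ∀ i : Fin p.n, D.edge (p.f i.castSucc) (p.f i.succ)

/-- `p` is unshielded: for every three consecutive nodes on it, the first and the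
third are non-adjacent. -/
def Unshielded {D : Dag V} {x y : V} (p : GPath D.Adj x y) : Prop :=
  ∀ (i : ℕ) (_ : i + 2 ≤ p.n), ¬ D.Adj (p.f ⟨i, by omega⟩) (p.f ⟨i + 2, by omega⟩)

end GPath

namespace Dag

/-- `x` is a possible ancestor of `y` in the CPDAG: there is a possibly directed path
from `x` to `y`. -/
def PossAn (D : Dag V) (x y : V) : Prop :=
  ∃ p : GPath D.Adj x y, p.CpPossiblyDirected

/-- `x` is an explicit ancestor of `y` in the CPDAG: there is a fully directed path
from `x` to `y` in the CPDAG. -/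
def ExplAn (D : Dag V) (x y : V) : Prop :=
  ∃ p : GPath D.Adj x y, p.CpDirected

/-- The CPDAG is amenable relative to `(x, y)`: every possibly directed path from
`x` to `y` starts with a directed edge out of `x`. -/
def Amenable (D : Dag V) (x y : V) : Prop :=
  ∀ p : GPath D.Adj x y, p.CpPossiblyDirected →
    ∀ _ : 0 < p.n, D.CpDir (p.f ⟨0, by omega⟩) (p.f ⟨1, by omega⟩)

/-- `S` is a valid adjustment set for `(x, y)` in the DAG `D`:
(i) no element of `S` is a descendant of any node `w ≠ x` lying on a directed path
from `x` to `y`, and (ii) every path between `x` and `y` that is not a directed path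
from `x` to `y` is blocked by `S`. -/
def ValidAdjustment (D : Dag V) (x y : V) (S : Set V) : Prop :=
  (∀ s ∈ S, ∀ w : V, w ≠ x → D.Anc x w → D.Anc w y → ¬ D.Anc w s) ∧
  (∀ p : GPath D.Adj x y, ¬ p.DirectedIn → p.Blocked D S)

/-- `Cn_D(x, y)`: the nodes `w ≠ x` lying on some directed path from `x` to `y` in `D`. -/
def Cn (D : Dag V) (x y : V) : Set V := {w | w ≠ x ∧ D.Anc x w ∧ D.Anc w y}

end Dag


namespace Dag

theorem edge_asymm {V : Type*} (D : Dag V) {a b : V} (h : D.edge a b) : ¬ D.edge b a :=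
  fun h' => D.acyclic a b h (.single h')

theorem edge_irrefl {V : Type*} (D : Dag V) {a : V} : ¬ D.edge a a :=
  fun h => D.acyclic a a h .refl

theorem adj_comm {V : Type*} (D : Dag V) {a b : V} : D.Adj a b ↔ D.Adj b a := Or.comm

theorem edge_trans_adj {V : Type*} (D : Dag V) {a b c : V} (h1 : D.edge a b) (h2 : D.edge b c)
    (h : D.Adj a c) : D.edge a c :=
  h.resolve_right fun h' => D.acyclic a b h1 (.trans (.single h2) (.single h'))

/-- Same skeleton and same v-structures. -/
def SV {V : Type*} (D D' : Dag V) : Prop :=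
  (∀ a b, D.Adj a b ↔ D'.Adj a b) ∧
  (∀ a b c, a ≠ c → ¬ D.Adj a c →
    ((D.edge a b ∧ D.edge c b) ↔ (D'.edge a b ∧ D'.edge c b)))

/-- Edges oriented by v-structures and the orientation rules. -/
inductive C {V : Type*} (D : Dag V) : V → V → Prop
  | vs {a b c : V} : D.edge a b → D.edge c b → a ≠ c → ¬ D.Adj a c → C D a b
  | r1 {a b c : V} : C D a b → D.edge b c → ¬ D.Adj a c → C D b c
  | r2 {a d b : V} : C D a d → C D d b → D.edge a b → C D a b
  | r3 {a e f b : V} : C D e b → C D f b → e ≠ f → ¬ D.Adj e f → D.Adj a e → D.Adj a f →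
      ¬ (D.edge e a ∧ D.edge f a) → D.edge a b → C D a b

theorem C.edge {V : Type*} {D : Dag V} {a b : V} (h : D.C a b) : D.edge a b := by
  cases h <;> assumption

theorem C.sound {V : Type*} {D D' : Dag V} (hs : D.SV D') {a b : V} (h : D.C a b) :
    D'.edge a b := by
  induction h with
  | @vs a b c h1 h2 h3 h4 => exact ((hs.2 a b c h3 h4).1 ⟨h1, h2⟩).1
  | @r1 a b c h1 h2 h3 ih =>
    have hadj : D'.Adj b c := (hs.1 b c).1 (.inl h2)
    refine hadj.resolve_right fun h => ?_
    have hne : a ≠ c := by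
      rintro rfl; exact D.edge_asymm h1.edge h2
    exact D.edge_asymm h2 ((hs.2 a b c hne h3).2 ⟨ih, h⟩).2
  | r2 h1 h2 h3 ih1 ih2 => exact D'.edge_trans_adj ih1 ih2 ((hs.1 _ _).1 (.inl h3))
  | @r3 a e f b h1 h2 h3 h4 h5 h6 h7 h8 ih1 ih2 =>
    have hadj : D'.Adj a b := (hs.1 _ _).1 (.inl h8)
    refine hadj.resolve_right fun h => h7 ?_
    have ha := D'.edge_trans_adj ih1 h (D'.adj_comm.1 ((hs.1 _ _).1 h5))
    have hb := D'.edge_trans_adj ih2 h (D'.adj_comm.1 ((hs.1 _ _).1 h6))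
    exact (hs.2 e a f h3 h4).2 ⟨ha, hb⟩

/-- Edges not oriented by the rules. -/
def U {V : Type*} (D : Dag V) (a b : V) : Prop := D.Adj a b ∧ ¬ D.C a b ∧ ¬ D.C b a

theorem U.symm {V : Type*} {D : Dag V} {a b : V} (h : D.U a b) : D.U b a :=
  ⟨D.adj_comm.1 h.1, h.2.2, h.2.1⟩

theorem C.chain {V : Type*} {D : Dag V} {a b c : V} (h : D.C a b) (hu : D.U b c) : D.C a c := by
  have key : ∀ {a b c : V}, D.C a b → D.U b c → D.Adj a c := by
    intro a b c h hu
    by_contra hn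
    rcases hu.1 with h1 | h1
    · exact hu.2.1 (.r1 h h1 hn)
    · have hne : a ≠ c := by rintro rfl; exact hu.2.2 h
      exact hu.2.2 (.vs h1 h.edge hne.symm fun h' => hn (D.adj_comm.1 h'))
  have hU : ∀ {a b c : V}, D.C a b → D.U b c → ¬ D.C a c → D.U a c := by
    intro a b c h hu hn
    refine ⟨key h hu, hn, fun h' => ?_⟩
    rcases hu.1 with h1 | h1
    · exact D.acyclic _ _ h.edge (.trans (.single h1) (.single h'.edge))
    · exact hu.2.2 (.r2 h' h h1)
  induction h generalizing c with
  | @vs a b d h1 h2 h3 h4 =>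
    by_contra hn
    have hab : D.C a b := .vs h1 h2 h3 h4
    have hdb : D.C d b := .vs h2 h1 h3.symm fun h' => h4 (D.adj_comm.1 h')
    have hac := key hab hu
    have hdc := key hdb hu
    have hcol : ¬ (D.edge a c ∧ D.edge d c) := fun ⟨x, y⟩ => hn (.vs x y h3 h4)
    rcases hu.1 with h | h
    · exact hcol ⟨D.edge_trans_adj h1 h hac, D.edge_trans_adj h2 h hdc⟩
    · exact hu.2.2 (.r3 hab hdb h3 h4 (D.adj_comm.1 hac) (D.adj_comm.1 hdc) hcol h)
  | @r1 d a b h1 h2 h3 ih =>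
    by_contra hn
    have hac := hU (.r1 h1 h2 h3) hu hn
    have hdc := ih hac
    rcases hu.1 with h | h
    · have hne : b ≠ d := by rintro rfl; exact D.edge_asymm h1.edge h2
      exact hu.2.1 (.vs h hdc.edge hne fun h' => h3 (D.adj_comm.1 h'))
    · exact hu.2.2 (.r1 hdc h h3)
  | @r2 a d b h1 h2 h3 ih1 ih2 =>
    have := ih2 hu
    exact .r2 h1 this (D.edge_trans_adj h1.edge this.edge (key (.r2 h1 h2 h3) hu))
  | @r3 a e f b h1 h2 h3 h4 h5 h6 h7 h8 ih1 ih2 =>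
    have he := ih1 hu
    have hf := ih2 hu
    refine .r3 he hf h3 h4 h5 h6 h7 ((key (.r3 h1 h2 h3 h4 h5 h6 h7 h8) hu).resolve_right fun h => ?_)
    exact h7 ⟨D.edge_trans_adj he.edge h (D.adj_comm.1 h5),
      D.edge_trans_adj hf.edge h (D.adj_comm.1 h6)⟩

/-- Perfect (reversed) vertex lists. -/
def Perf {V : Type*} (U : V → V → Prop) : List V → Prop
  | [] => True
  | v :: L => (∀ x ∈ L, ∀ y ∈ L, U v x → U v y → x ≠ y → U x y) ∧ Perf U L

theorem perf_of_clique {V : Type*} {U : V → V → Prop} (L : List V)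
    (h : ∀ x ∈ L, ∀ y ∈ L, x ≠ y → U x y) : Perf U L := by
  induction L with
  | nil => trivial
  | cons v L ih =>
    exact ⟨fun x hx y hy _ _ hne => h x (by simp [hx]) y (by simp [hy]) hne,
      ih fun x hx y hy => h x (by simp [hx]) y (by simp [hy])⟩

theorem perf_insert {V : Type*} {U : V → V → Prop} (v : V) (K K' : List V) (M : List V)
    (hv : ∀ m ∈ M, ¬ U m v)
    (hK : ∀ x, x ∈ K' ↔ x = v ∨ x ∈ K)
    (hcl : ∀ x ∈ K', ∀ y ∈ K', x ≠ y → U x y)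
    (h : Perf U (M ++ K)) : Perf U (M ++ K') := by
  induction M with
  | nil => exact perf_of_clique _ hcl
  | cons m M ih =>
    refine ⟨fun x hx y hy hmx hmy hne => ?_, ih (fun m hm => hv m (by simp [hm])) h.2⟩
    have hm := hv m (by simp)
    have aux : ∀ z ∈ M ++ K', U m z → z ∈ M ++ K := by
      intro z hz hmz
      rcases List.mem_append.1 hz with hz | hz
      · simp [hz]
      · rcases (hK z).1 hz with rfl | hz
        · exact absurd hmz hm
        · simp [hz]
    exact h.1 x (aux x hx hmx) y (aux y hy hmy) hmx hmy hne

theorem perf_reroot {V : Type*} {U : V → V → Prop} (hsymm : ∀ a b, U a b → U b a)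
    (L : List V) (hL : L.Nodup) (hp : Perf U L) (K : List V) (hKn : K.Nodup)
    (hKL : ∀ x ∈ K, x ∈ L) (hcl : ∀ x ∈ K, ∀ y ∈ K, x ≠ y → U x y) :
    ∃ M, Perf U (M ++ K) ∧ (M ++ K).Nodup ∧ ∀ x, x ∈ M ++ K ↔ x ∈ L := by
  classical
  induction L generalizing K with
  | nil =>
    have : K = [] := List.eq_nil_iff_forall_not_mem.2 fun x hx => by simpa using hKL x hx
    subst this
    exact ⟨[], trivial, by simp, by simp⟩
  | cons v L ih =>
    have hvL : v ∉ L := (List.nodup_cons.1 hL).1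
    have hLn := (List.nodup_cons.1 hL).2
    by_cases hvK : v ∈ K
    · set N := L.filter (fun z => U v z ∧ z ∉ K) with hN
      have hmemN : ∀ z, z ∈ N ↔ z ∈ L ∧ U v z ∧ z ∉ K := by intro z; simp [hN]
      have hmemE : ∀ z, z ∈ K.erase v ↔ z ≠ v ∧ z ∈ K := fun z => hKn.mem_erase_iff
      have hin : ∀ z, z ∈ N ++ K.erase v → z ∈ L ∧ U v z := by
        intro z hz
        rcases List.mem_append.1 hz with hz | hz
        · exact ⟨((hmemN z).1 hz).1, ((hmemN z).1 hz).2.1⟩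
        · have h1 := (hmemE z).1 hz
          refine ⟨?_, hcl v hvK z h1.2 h1.1.symm⟩
          have := hKL z h1.2
          simpa [h1.1] using this
      obtain ⟨M, hM1, hM2, hM3⟩ := ih hLn hp.2 (N ++ K.erase v)
        (by
          refine List.Nodup.append (hLn.filter _) (hKn.erase v) ?_
          intro z hz hz'
          exact ((hmemN z).1 hz).2.2 ((hmemE z).1 hz').2)
        (fun z hz => (hin z hz).1)
        (fun x hx y hy hne => hp.1 x (hin x hx).1 y (hin y hy).1 (hin x hx).2 (hin y hy).2 hne)
      have hmem : ∀ x, x ∈ N ++ K ↔ x = v ∨ x ∈ N ++ K.erase v := by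
        intro x
        simp only [List.mem_append, hmemE]
        by_cases hx : x = v
        · subst hx; simp [hvK]
        · simp [hx]
      refine ⟨M ++ N, ?_, ?_, ?_⟩
      · rw [List.append_assoc]
        refine perf_insert v (N ++ K.erase v) (N ++ K) M ?_ hmem ?_ hM1
        · intro m hm hmv
          have hmL : m ∈ L := (hM3 m).1 (by simp [hm])
          have hd := (List.nodup_append'.1 hM2).2.2
          refine hd hm ?_
          by_cases hmK : m ∈ K
          · exact List.mem_append_right _ ((hmemE m).2 ⟨by rintro rfl; exact hvL hmL, hmK⟩)
          · exact List.mem_append_left _ ((hmemN m).2 ⟨hmL, hsymm _ _ hmv, hmK⟩)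
        · intro x hx y hy hne
          rcases (hmem x).1 hx with rfl | hx <;> rcases (hmem y).1 hy with rfl | hy
          · exact absurd rfl hne
          · exact (hin y hy).2
          · exact hsymm _ _ (hin x hx).2
          · exact hp.1 x (hin x hx).1 y (hin y hy).1 (hin x hx).2 (hin y hy).2 hne
      · rw [List.append_assoc]
        have h1 := List.nodup_append'.1 hM2
        refine List.Nodup.append h1.1 (List.Nodup.append (hLn.filter _) hKn ?_) ?_
        · intro z hz hz'
          exact ((hmemN z).1 hz).2.2 hz'
        · intro z hz hz'
          rcases (hmem z).1 hz' with rfl | hz'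
          · exact hvL ((hM3 z).1 (by simp [hz]))
          · exact h1.2.2 hz hz'
      · intro x
        rw [List.append_assoc, List.mem_append, hmem, List.mem_cons, ← hM3 x]
        simp only [List.mem_append]; tauto
    · obtain ⟨M, hM1, hM2, hM3⟩ := ih hLn hp.2 K hKn (fun x hx => by
        have := hKL x hx
        rcases List.mem_cons.1 this with rfl | h
        · exact absurd hx hvK
        · exact h) hcl
      refine ⟨v :: M, ⟨fun x hx y hy => hp.1 x ((hM3 x).1 hx) y ((hM3 y).1 hy), hM1⟩, ?_, ?_⟩
      · exact List.nodup_cons.2 ⟨fun h => hvL ((hM3 v).1 h), hM2⟩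
      · intro x
        have := hM3 x
        simp only [List.cons_append, List.mem_cons, this]

theorem perf_idx {V : Type*} [DecidableEq V] {U : V → V → Prop} (L : List V) (h : Perf U L)
    (u v w : V) (hu : u ∈ L) (hv : v ∈ L)
    (h1 : L.idxOf w < L.idxOf u) (h2 : L.idxOf w < L.idxOf v)
    (huw : U w u) (hvw : U w v) (hne : u ≠ v) : U u v := by
  induction L with
  | nil => simp at hu
  | cons a L ih =>
    have hua : u ≠ a := by rintro rfl; simp at h1
    have hva : v ≠ a := by rintro rfl; simp at h2
    have hu' : u ∈ L := by simpa [hua] using hu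
    have hv' : v ∈ L := by simpa [hva] using hv
    by_cases hwa : w = a
    · subst hwa; exact h.1 u hu' v hv' huw hvw hne
    · rw [List.idxOf_cons_ne _ (Ne.symm hwa), List.idxOf_cons_ne _ (Ne.symm hua)] at h1
      rw [List.idxOf_cons_ne _ (Ne.symm hwa), List.idxOf_cons_ne _ (Ne.symm hva)] at h2
      exact ih h.2 hu' hv' (by omega) (by omega)

theorem wf_up {V : Type*} [Finite V] (D : Dag V) : WellFounded (Relation.TransGen D.edge) := by
  have : Std.Irrefl (Relation.TransGen D.edge) := ⟨fun a h => by
    obtain ⟨b, h1, h2⟩ := Relation.TransGen.head'_iff.1 h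
    exact D.acyclic a b h1 h2⟩
  exact Finite.wellFounded_of_trans_of_irrefl _

theorem wf_down {V : Type*} [Finite V] (D : Dag V) :
    WellFounded (fun a b => Relation.TransGen D.edge b a) := by
  have : Std.Irrefl (fun a b => Relation.TransGen D.edge b a) := ⟨fun a h => by
    obtain ⟨b, h1, h2⟩ := Relation.TransGen.head'_iff.1 h
    exact D.acyclic a b h1 h2⟩
  have : IsTrans V (fun a b => Relation.TransGen D.edge b a) := ⟨fun a b c h1 h2 => h2.trans h1⟩
  exact Finite.wellFounded_of_trans_of_irrefl _

theorem exists_perf_list {V : Type*} [Finite V] (D : Dag V) (s : Finset V) :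
    ∃ L : List V, L.Nodup ∧ (∀ x, x ∈ L ↔ x ∈ s) ∧ Perf D.U L := by
  classical
  induction hn : s.card generalizing s with
  | zero =>
    rw [Finset.card_eq_zero] at hn
    subst hn
    exact ⟨[], by simp, by simp, trivial⟩
  | succ n ih =>
    have hne : s.Nonempty := by rw [← Finset.card_pos]; omega
    obtain ⟨v, hv, hmin⟩ := D.wf_down.has_min (↑s : Set V) hne
    obtain ⟨L, h1, h2, h3⟩ := ih (s.erase v) (by rw [Finset.card_erase_of_mem hv]; omega)
    have key : ∀ x ∈ L, D.U v x → D.edge x v := fun x hx hu =>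
      hu.1.resolve_left fun h => hmin x (Finset.mem_of_mem_erase ((h2 x).1 hx)) (.single h)
    refine ⟨v :: L, List.nodup_cons.2 ⟨fun h => by simpa using (h2 v).1 h, h1⟩, ?_, ?_, h3⟩
    · intro x
      rw [List.mem_cons, h2, Finset.mem_erase]
      by_cases hx : x = v
      · subst hx; simpa using hv
      · simp [hx]
    · intro x hx y hy hux huy hxy
      have ex := key x hx hux
      have ey := key y hy huy
      refine ⟨?_, fun h => ?_, fun h => ?_⟩
      · by_contra hn
        exact hux.2.2 (.vs ex ey hxy hn)
      · exact hux.2.2 (h.chain huy.symm)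
      · exact huy.2.2 (h.chain hux.symm)

/-- Reorient the unoriented edges along an order. -/
theorem exists_reorient {V : Type*} [Finite V] (D : Dag V) (a b : V) (hab : ¬ D.C a b) :
    ∃ D' : Dag V, D.SV D' ∧ ¬ D'.edge a b := by
  classical
  have := Fintype.ofFinite V
  obtain ⟨L0, h1, h2, h3⟩ := D.exists_perf_list Finset.univ
  obtain ⟨M, hM1, hM2, hM3⟩ := perf_reroot (fun _ _ h => U.symm h) L0 h1 h3 [b] (by simp)
    (by simp [h2]) (by simp)
  set L := M ++ [b] with hL
  have hall : ∀ x, x ∈ L := fun x => (hM3 x).2 ((h2 x).2 (Finset.mem_univ x))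
  let E : V → V → Prop := fun x y => D.C x y ∨ (D.U x y ∧ L.idxOf y < L.idxOf x)
  have hCE : ∀ x y z, Relation.ReflTransGen E y z → D.C x y → Relation.TransGen D.C x z := by
    intro x y z h hc
    induction h with
    | refl => exact .single hc
    | tail _ h ih =>
      rcases h with h | h
      · exact ih.tail h
      · obtain ⟨w, hw1, hw2⟩ := Relation.TransGen.tail'_iff.1 ih
        exact Relation.TransGen.tail'_iff.2 ⟨w, hw1, hw2.chain h.1⟩
  have hCirr : ∀ x, ¬ Relation.TransGen D.C x x := by
    intro x h
    have h' : Relation.TransGen D.edge x x := Relation.TransGen.mono (fun _ _ h => C.edge h) _ _ h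
    obtain ⟨b, h1, h2⟩ := Relation.TransGen.head'_iff.1 h'
    exact D.acyclic x b h1 h2
  have hsplit : ∀ x y, Relation.ReflTransGen E x y → L.idxOf y ≤ L.idxOf x ∨
      ∃ u v, Relation.ReflTransGen E x u ∧ D.C u v ∧ Relation.ReflTransGen E v y := by
    intro x y h
    induction h with
    | refl => exact .inl le_rfl
    | @tail y z hxy h ih =>
      rcases ih with ih | ⟨u, v, h1, h2, h3⟩
      · rcases h with h | h
        · exact .inr ⟨y, z, hxy, h, .refl⟩
        · exact .inl (by omega)
      · exact .inr ⟨u, v, h1, h2, h3.tail h⟩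
  let D' : Dag V := ⟨E, by
    intro x y hxy hyx
    rcases hxy with hc | hu
    · exact hCirr _ (hCE _ _ _ hyx hc)
    · rcases hsplit y x hyx with h | ⟨u, v, k1, k2, k3⟩
      · omega
      · have hxy' : E x y := .inr hu
        exact hCirr _ (hCE _ _ _ ((k3.tail hxy').trans k1) k2)⟩
  have hadj : ∀ x y, D.Adj x y ↔ D'.Adj x y := by
    intro x y
    constructor
    · intro h
      by_cases hc : D.C x y
      · exact .inl (.inl hc)
      by_cases hc' : D.C y x
      · exact .inr (.inl hc')
      have hu : D.U x y := ⟨h, hc, hc'⟩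
      have hne : x ≠ y := by
        rintro rfl
        rcases h with h | h <;> exact D.edge_irrefl h
      have hi : L.idxOf x ≠ L.idxOf y := fun h => hne ((List.idxOf_inj (hall x)).1 h)
      rcases lt_or_gt_of_ne hi with hi | hi
      · exact .inr (.inr ⟨hu.symm, hi⟩)
      · exact .inl (.inr ⟨hu, hi⟩)
    · rintro ((h | h) | (h | h))
      · exact .inl h.edge
      · exact h.1.1
      · exact .inr h.edge
      · exact D.adj_comm.1 h.1.1
  refine ⟨D', ⟨hadj, ?_⟩, ?_⟩
  · intro x y z hne hn
    constructor
    · rintro ⟨h1, h2⟩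
      exact ⟨.inl (.vs h1 h2 hne hn), .inl (.vs h2 h1 hne.symm fun h => hn (D.adj_comm.1 h))⟩
    · rintro ⟨h1 | h1, h2 | h2⟩
      · exact ⟨h1.edge, h2.edge⟩
      · exact absurd (.inl (h1.chain h2.1.symm).edge) hn
      · exact absurd (.inr (h2.chain h1.1.symm).edge) hn
      · exact absurd (perf_idx L hM1 x z y (hall x) (hall z) h1.2 h2.2 h1.1.symm h2.1.symm hne).1 hn
  · rintro (h | h)
    · exact hab h
    · have hb : b ∉ M := fun hb => (List.nodup_append'.1 hM2).2.2 hb (by simp)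
      have e1 : L.idxOf b = M.length := by rw [hL, List.idxOf_append_of_notMem hb]; simp
      have e2 : L.idxOf a < L.length := List.idxOf_lt_length_iff.2 (hall a)
      have e3 : L.length = M.length + 1 := by simp [hL]
      omega

end Dag

namespace Dag

/-- The edge `a → b` is covered. -/
def Cov {V : Type*} (D : Dag V) (a b : V) : Prop :=
  D.edge a b ∧ ∀ z, z ≠ a → (D.edge z b ↔ D.edge z a)

/-- Reverse a covered edge. -/
def rev {V : Type*} (D : Dag V) (a b : V) (h : D.Cov a b) : Dag V where
  edge u v := (D.edge u v ∧ ¬ (u = a ∧ v = b)) ∨ (u = b ∧ v = a)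
  acyclic := by
    set E : V → V → Prop := fun u v => (D.edge u v ∧ ¬ (u = a ∧ v = b)) ∨ (u = b ∧ v = a) with hE
    have hab : a ≠ b := by rintro rfl; exact D.edge_irrefl h.1
    have k1 : ∀ v, Relation.ReflTransGen E a v → Relation.ReflTransGen D.edge a v ∧ v ≠ b := by
      intro v hv
      induction hv with
      | refl => exact ⟨.refl, hab⟩
      | @tail v w _ hvw ih =>
        rcases hvw with ⟨h1, h2⟩ | ⟨h1, h2⟩
        · refine ⟨ih.1.tail h1, ?_⟩
          rintro rfl
          have hva : v ≠ a := fun e => h2 ⟨e, rfl⟩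
          exact D.acyclic v a ((h.2 v hva).1 h1) ih.1
        · exact absurd h1 ih.2
    have k2 : ∀ v w, Relation.ReflTransGen E v w → Relation.ReflTransGen D.edge v w ∨
        (Relation.ReflTransGen E v b ∧ Relation.ReflTransGen E a w) := by
      intro v w hv
      induction hv with
      | refl => exact .inl .refl
      | @tail u w hvu huw ih =>
        have huw' := huw
        rcases huw with ⟨h1, h2⟩ | ⟨h1, h2⟩
        · rcases ih with ih | ih
          · exact .inl (ih.tail h1)
          · exact .inr ⟨ih.1, ih.2.tail huw'⟩
        · subst h1 h2
          exact .inr ⟨hvu, .refl⟩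
    intro u v huv hvu
    have huv' : E u v := huv
    rcases huv with ⟨h1, h2⟩ | ⟨h1, h2⟩
    · rcases k2 v u hvu with k | k
      · exact D.acyclic u v h1 k
      · exact (k1 b ((k.2.tail huv').trans k.1)).2 rfl
    · subst h1 h2
      exact (k1 _ hvu).2 rfl

theorem rev_edge {V : Type*} (D : Dag V) (a b : V) (h : D.Cov a b) (u v : V) :
    (D.rev a b h).edge u v ↔ (D.edge u v ∧ ¬ (u = a ∧ v = b)) ∨ (u = b ∧ v = a) := Iff.rfl

theorem rev_cov {V : Type*} (D : Dag V) (a b : V) (h : D.Cov a b) : (D.rev a b h).Cov b a := by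
  have hab : a ≠ b := by rintro rfl; exact D.edge_irrefl h.1
  refine ⟨.inr ⟨rfl, rfl⟩, fun z hz => ?_⟩
  rw [rev_edge, rev_edge]
  by_cases hza : z = a
  · subst hza
    simp [hz, D.edge_irrefl]
  · have := h.2 z hza
    simp [hz, hza, this]

theorem rev_rev_edge {V : Type*} (D : Dag V) (a b : V) (h : D.Cov a b) (u v : V) :
    ((D.rev a b h).rev b a (D.rev_cov a b h)).edge u v ↔ D.edge u v := by
  have hab : a ≠ b := by rintro rfl; exact D.edge_irrefl h.1
  have h1 := h.1
  have h2 : ¬ D.edge b a := D.edge_asymm h1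
  rw [rev_edge, rev_edge]
  grind

theorem rev_sv {V : Type*} (D : Dag V) (a b : V) (h : D.Cov a b) : D.SV (D.rev a b h) := by
  have hab : a ≠ b := by rintro rfl; exact D.edge_irrefl h.1
  have h1 := h.1
  have h2 : ¬ D.edge b a := D.edge_asymm h1
  have h3 := h.2
  constructor
  · intro u v
    simp only [Adj, rev_edge]
    grind
  · intro x y z hne hn
    simp only [Adj, rev_edge] at *
    grind

theorem exists_cov {V : Type*} [Finite V] (D D' : Dag V) (hs : D.SV D')
    (hd : ∃ a b, D.edge a b ∧ D'.edge b a) :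
    ∃ a b, D.Cov a b ∧ D'.edge b a := by
  obtain ⟨b, ⟨a0, hb⟩, hbmin⟩ := D.wf_up.has_min {b | ∃ a, D.edge a b ∧ D'.edge b a}
    (by obtain ⟨a, b, h⟩ := hd; exact ⟨b, a, h⟩)
  obtain ⟨a, ha, hamax⟩ := D.wf_down.has_min {a | D.edge a b ∧ D'.edge b a} ⟨a0, hb⟩
  have hmin : ∀ c d, D.edge c d → D'.edge d c → D.edge d b → False := fun c d h1 h2 h3 =>
    hbmin d ⟨c, h1, h2⟩ (.single h3)
  have hmax : ∀ c, D.edge c b → D'.edge b c → D.edge a c → False := fun c h1 h2 h3 =>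
    hamax c ⟨h1, h2⟩ (.single h3)
  refine ⟨a, b, ⟨ha.1, fun z hz => ⟨fun h => ?_, fun h => ?_⟩⟩, ha.2⟩
  · have hadj : D.Adj z a := by
      by_contra hn
      exact D'.edge_asymm ((hs.2 z b a hz hn).1 ⟨h, ha.1⟩).2 ha.2
    refine hadj.resolve_right fun haz => ?_
    rcases (hs.1 _ _).1 hadj with h' | h'
    · exact hmin a z haz h' h
    · exact hmax z h (D'.edge_trans_adj ha.2 h' ((hs.1 _ _).1 (.inr h))) haz
  · have hzb : z ≠ b := by rintro rfl; exact D.edge_asymm ha.1 h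
    have hadj : D.Adj z b := by
      by_contra hn
      rcases (hs.1 _ _).1 (.inl h : D.Adj z a) with h' | h'
      · exact D.edge_asymm ha.1 ((hs.2 z a b hzb hn).2 ⟨h', ha.2⟩).2
      · exact hmin z a h h' ha.1
    exact D.edge_trans_adj h ha.1 hadj

inductive St | T | F | Out | In

/-- Active walk states. -/
inductive R {V : Type*} (D : Dag V) (S : Set V) (x : V) : St → V → Prop
  | startOut : R D S x .Out x
  | startIn : R D S x .In x
  | goOut {u v : V} : R D S x .Out u → D.edge u v → R D S x .T v
  | goIn {u v : V} : R D S x .In u → D.edge v u → R D S x .F v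
  | tOut {v : V} : R D S x .T v → v ∉ S → R D S x .Out v
  | tIn {v : V} : R D S x .T v → v ∈ S → R D S x .In v
  | fOut {v : V} : R D S x .F v → v ∉ S → R D S x .Out v
  | fIn {v : V} : R D S x .F v → v ∉ S → R D S x .In v

/-- Connected by an active walk. -/
def Con {V : Type*} (D : Dag V) (S : Set V) (x y : V) : Prop :=
  x = y ∨ D.R S x .T y ∨ D.R S x .F y

/-- Invariant for covered edge reversal. -/
def J {V : Type*} (D : Dag V) (S : Set V) (x a b : V) (s : St) (v : V) : Prop :=
  let Z := D.R S x .In a ∨ D.R S x .In b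
  let oa := D.R S x .Out a
  let ob := D.R S x .Out b
  let ca := D.Con S x a
  let cb := D.Con S x b
  (v ≠ a → v ≠ b → D.R S x s v) ∧
  (v = a → match s with
    | .T => ca ∧ cb ∧ (a ∉ S → oa ∧ (b ∉ S → ob) ∧ (b ∈ S → Z)) ∧ (a ∈ S → Z)
    | .F => ca ∧ (a ∉ S → Z ∧ oa ∧ (b ∉ S → ob) ∧ cb)
    | .Out => ca ∧ cb ∧ oa ∧ (b ∉ S → ob) ∧ (b ∈ S → Z)
    | .In => Z) ∧
  (v = b → match s with
    | .T => ca ∧ cb ∧ (b ∉ S → ob) ∧ (b ∈ S → Z ∧ (a ∉ S → oa))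
    | .F => cb ∧ (b ∉ S → ca ∧ ob ∧ Z ∧ (a ∉ S → oa))
    | .Out => ob
    | .In => ca ∧ cb ∧ Z ∧ (a ∉ S → oa) ∧ (b ∉ S → ob))

theorem R_J {V : Type*} (D : Dag V) (a b : V) (h : D.Cov a b) (S : Set V) (x : V) (s : St) (v : V)
    (hr : D.R S x s v) : (D.rev a b h).J S x a b s v := by
  have hab : a ≠ b := by rintro rfl; exact D.edge_irrefl h.1
  have h1 := h.1
  have h2 : ¬ D.edge b a := D.edge_asymm h1
  have h3 := h.2
  set D' := D.rev a b h with hD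
  have he : ∀ u v, D'.edge u v ↔ (D.edge u v ∧ ¬ (u = a ∧ v = b)) ∨ (u = b ∧ v = a) :=
    D.rev_edge a b h
  have hba : D'.edge b a := (he b a).2 (.inr ⟨rfl, rfl⟩)
  have irr : ∀ v, ¬ D.edge v v := fun v => D.edge_irrefl
  have gO : ∀ u v, D'.R S x .Out u → D'.edge u v → D'.R S x .T v := fun u v => R.goOut
  have gI : ∀ u v, D'.R S x .In u → D'.edge v u → D'.R S x .F v := fun u v => R.goIn
  have tO : ∀ v, D'.R S x .T v → v ∉ S → D'.R S x .Out v := fun v => R.tOut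
  have tI : ∀ v, D'.R S x .T v → v ∈ S → D'.R S x .In v := fun v => R.tIn
  have fO : ∀ v, D'.R S x .F v → v ∉ S → D'.R S x .Out v := fun v => R.fOut
  have fI : ∀ v, D'.R S x .F v → v ∉ S → D'.R S x .In v := fun v => R.fIn
  have sO : D'.R S x .Out x := R.startOut
  have sI : D'.R S x .In x := R.startIn
  clear_value D'
  clear hD
  induction hr with
  | startOut => unfold J Con; grind
  | startIn => unfold J Con; grind
  | @goOut u v _ hh ih =>
    unfold J Con at *
    have e1 := he u v
    have e2 := h3 u
    have e3 := he u a
    have e4 := he u b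
    have g1 := gO u v
    have g2 := gO u a
    have g3 := gO u b
    by_cases hua : u = a <;> by_cases hub : u = b <;> by_cases hva : v = a <;>
      by_cases hvb : v = b <;> grind
  | @goIn u v _ hh ih =>
    unfold J Con at *
    have e1 := he v u
    have e2 := h3 v
    have e3 := he v a
    have e4 := he v b
    have g1 := gI u v
    have g2 := gI a v
    have g3 := gI b v
    by_cases hua : u = a <;> by_cases hub : u = b <;> by_cases hva : v = a <;>
      by_cases hvb : v = b <;> grind
  | tOut _ hh ih => unfold J Con at *; grind
  | tIn _ hh ih => unfold J Con at *; grind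
  | fOut _ hh ih => unfold J Con at *; grind
  | fIn _ hh ih => unfold J Con at *; grind

theorem con_rev {V : Type*} (D : Dag V) (a b : V) (h : D.Cov a b) (S : Set V) (x y : V)
    (hc : D.Con S x y) : (D.rev a b h).Con S x y := by
  rcases hc with hc | hc | hc
  · exact .inl hc
  · have := R_J D a b h S x _ _ hc
    unfold J at this
    by_cases h1 : y = a
    · exact h1 ▸ (this.2.1 h1).1
    by_cases h2 : y = b
    · exact h2 ▸ (this.2.2 h2).2.1
    · exact .inr (.inl (this.1 h1 h2))
  · have := R_J D a b h S x _ _ hc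
    unfold J at this
    by_cases h1 : y = a
    · exact h1 ▸ (this.2.1 h1).1
    by_cases h2 : y = b
    · exact h2 ▸ (this.2.2 h2).1
    · exact .inr (.inr (this.1 h1 h2))

theorem ext_edge {V : Type*} {D D' : Dag V} (h : ∀ u v, D.edge u v ↔ D'.edge u v) : D = D' := by
  cases D; cases D'
  congr
  funext u v
  exact propext (h u v)

theorem con_rev_iff {V : Type*} (D : Dag V) (a b : V) (h : D.Cov a b) (S : Set V) (x y : V) :
    D.Con S x y ↔ (D.rev a b h).Con S x y := by
  refine ⟨con_rev D a b h S x y, fun hc => ?_⟩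
  have := con_rev _ b a (D.rev_cov a b h) S x y hc
  rwa [ext_edge (D.rev_rev_edge a b h)] at this

theorem con_of_sv {V : Type*} [Finite V] (D D' : Dag V) (hs : D.SV D') (S : Set V) (x y : V) :
    D.Con S x y ↔ D'.Con S x y := by
  induction hn : Set.ncard {p : V × V | D.edge p.1 p.2 ∧ D'.edge p.2 p.1} using
    Nat.strong_induction_on generalizing D with
  | _ n ih =>
    by_cases hd : ∃ a b, D.edge a b ∧ D'.edge b a
    · obtain ⟨a, b, hc, hba⟩ := exists_cov D D' hs hd
      rw [con_rev_iff D a b hc]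
      have hs1 := D.rev_sv a b hc
      refine ih _ ?_ (D.rev a b hc) ?_ rfl
      · rw [← hn]
        refine Set.ncard_lt_ncard ⟨?_, ?_⟩ (Set.toFinite _)
        · rintro ⟨u, v⟩ ⟨h1, h2⟩
          rcases h1 with h1 | ⟨rfl, rfl⟩
          · exact ⟨h1.1, h2⟩
          · exact absurd h2 (D'.edge_asymm hba)
        · intro hsub
          have := @hsub (a, b) ⟨hc.1, hba⟩
          rcases this.1 with h | h
          · exact h.2 ⟨rfl, rfl⟩
          · have e : a = b := h.1
            subst e
            exact D.edge_irrefl hc.1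
      · refine ⟨fun u v => (hs1.1 u v).symm.trans (hs.1 u v), fun u v w hne hn => ?_⟩
        have hn' : ¬ D.Adj u w := fun h => hn ((hs1.1 _ _).1 h)
        exact (hs1.2 u v w hne hn').symm.trans (hs.2 u v w hne hn')
    · have : D = D' := ext_edge fun u v => by
        constructor
        · intro h
          exact ((hs.1 u v).1 (.inl h)).resolve_right fun h' => hd ⟨u, v, h, h'⟩
        · intro h
          exact ((hs.1 u v).2 (.inl h)).resolve_right fun h' => hd ⟨v, u, h', h⟩
      rw [this]

end Dag

namespace Dag

/-- `v` has a descendant in `S`. -/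
def AnS {V : Type*} (D : Dag V) (S : Set V) (v : V) : Prop := ∃ d, D.Anc v d ∧ d ∈ S

/-- Open paths, with nodes indexed by natural numbers. -/
structure OP {V : Type*} (D : Dag V) (S : Set V) (x v : V) (n : ℕ) (f : ℕ → V) : Prop where
  first : f 0 = x
  last : f n = v
  inj : ∀ i j, i ≤ n → j ≤ n → f i = f j → i = j
  adj : ∀ i, i < n → D.Adj (f i) (f (i + 1))
  col : ∀ i, i + 2 ≤ n → D.edge (f i) (f (i + 1)) → D.edge (f (i + 2)) (f (i + 1)) →
    D.AnS S (f (i + 1))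
  non : ∀ i, i + 2 ≤ n → ¬ (D.edge (f i) (f (i + 1)) ∧ D.edge (f (i + 2)) (f (i + 1))) →
    f (i + 1) ∉ S

theorem OP.not_dSep {V : Type*} {D : Dag V} {S : Set V} {x v : V} {n : ℕ} {f : ℕ → V}
    (h : D.OP S x v n f) : ¬ D.dSep x v S := by
  intro hd
  let p : GPath D.Adj x v :=
    { n := n
      f := fun i => f i
      inj := fun i j hij => Fin.ext (h.inj i j (by omega) (by omega) hij)
      first := h.first
      last := h.last
      adj := fun i => h.adj i i.2 }
  obtain ⟨i, h0, hn, hb⟩ := hd p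
  obtain ⟨k, rfl⟩ : ∃ k, i = k + 1 := ⟨i - 1, by omega⟩
  have hn' : k + 1 < n := hn
  have hiff : p.ColliderAt D.edge (k + 1) ↔
      (D.edge (f k) (f (k + 1)) ∧ D.edge (f (k + 2)) (f (k + 1))) :=
    ⟨fun ⟨_, _, h⟩ => h, fun h => ⟨h0, hn, h⟩⟩
  rcases hb with ⟨h1, h2⟩ | ⟨h1, h2⟩
  · exact h.non k (by omega) (fun h' => h1 (hiff.2 h')) h2
  · obtain ⟨d, hd1, hd2⟩ := h.col k (by omega) (hiff.1 h1).1 (hiff.1 h1).2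
    exact h2 d hd1 hd2

theorem exists_op {V : Type*} {D : Dag V} {S : Set V} {x v : V} (h : ¬ D.dSep x v S) :
    ∃ n f, D.OP S x v n f := by
  unfold dSep at h
  push Not at h
  obtain ⟨p, hp⟩ := h
  let f : ℕ → V := fun k => if hk : k < p.n + 1 then p.f ⟨k, hk⟩ else x
  have hf : ∀ k (hk : k < p.n + 1), f k = p.f ⟨k, hk⟩ := fun k hk => dif_pos hk
  have hcol : ∀ i (hi : i + 2 ≤ p.n), p.ColliderAt D.edge (i + 1) ↔
      (D.edge (f i) (f (i + 1)) ∧ D.edge (f (i + 2)) (f (i + 1))) := by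
    intro i hi
    rw [hf i (by omega), hf (i + 1) (by omega), hf (i + 2) (by omega)]
    exact ⟨fun ⟨_, _, h⟩ => h, fun h => ⟨by omega, by omega, h⟩⟩
  refine ⟨p.n, f, ?_, ?_, ?_, ?_, ?_, ?_⟩
  · rw [hf 0 (by omega)]; exact p.first
  · rw [hf p.n (by omega)]; exact p.last
  · intro i j hi hj hij
    rw [hf i (by omega), hf j (by omega)] at hij
    exact congrArg Fin.val (p.inj hij)
  · intro i hi
    rw [hf i (by omega), hf (i + 1) (by omega)]
    exact p.adj ⟨i, hi⟩
  · intro i hi h1 h2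
    by_contra hn
    refine hp ⟨i + 1, by omega, by omega, .inr ⟨(hcol i hi).2 ⟨h1, h2⟩, fun d hd hdS => hn ?_⟩⟩
    rw [hf (i + 1) (by omega)]
    exact ⟨d, hd, hdS⟩
  · intro i hi h1 h2
    rw [hf (i + 1) (by omega)] at h2
    exact hp ⟨i + 1, by omega, by omega, .inl ⟨fun h => h1 ((hcol i hi).1 h), h2⟩⟩

theorem R_anc {V : Type*} {D : Dag V} {S : Set V} {x v : V} (h : D.AnS S v) :
    D.R S x .T v → D.R S x .In v := by
  obtain ⟨d, hd, hdS⟩ := h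
  unfold Anc at hd
  induction hd using Relation.ReflTransGen.head_induction_on with
  | refl => exact fun h => .tIn h hdS
  | @head v w hvw _ ih =>
    intro h
    by_cases hv : v ∈ S
    · exact .tIn h hv
    · exact .fIn (.goIn (ih (.goOut (.tOut h hv) hvw)) hvw) hv

theorem OP.con {V : Type*} {D : Dag V} {S : Set V} {x v : V} {n : ℕ} {f : ℕ → V}
    (h : D.OP S x v n f) : D.Con S x v := by
  have key : ∀ m, m + 1 ≤ n → (D.edge (f m) (f (m + 1)) → D.R S x .T (f (m + 1))) ∧
      (D.edge (f (m + 1)) (f m) → D.R S x .F (f (m + 1))) := by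
    intro m
    induction m with
    | zero =>
      intro _
      rw [h.first]
      exact ⟨fun h => .goOut .startOut h, fun h => .goIn .startIn h⟩
    | succ m ih =>
      intro hm
      obtain ⟨i1, i2⟩ := ih (by omega)
      have hc := h.col m (by omega)
      have hn := h.non m (by omega)
      rcases h.adj m (by omega) with ha | ha
      · refine ⟨fun hh => .goOut (.tOut (i1 ha) (hn fun h' => D.edge_asymm hh h'.2)) hh, fun hh => ?_⟩
        exact .goIn (R_anc (hc ha hh) (i1 ha)) hh
      · have hS := hn fun h' => D.edge_asymm ha h'.1
        exact ⟨fun hh => .goOut (.fOut (i2 ha) hS) hh, fun hh => .goIn (.fIn (i2 ha) hS) hh⟩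
  rcases n with _ | n
  · exact .inl (h.first.symm.trans h.last)
  · obtain ⟨k1, k2⟩ := key n le_rfl
    rw [← h.last]
    rcases h.adj n (by omega) with ha | ha
    · exact .inr (.inl (k1 ha))
    · exact .inr (.inr (k2 ha))

theorem OP.trunc {V : Type*} {D : Dag V} {S : Set V} {x v : V} {n : ℕ} {f : ℕ → V}
    (h : D.OP S x v n f) (m : ℕ) (hm : m ≤ n) : D.OP S x (f m) m f where
  first := h.first
  last := rfl
  inj i j hi hj := h.inj i j (by omega) (by omega)
  adj i hi := h.adj i (by omega)
  col i hi := h.col i (by omega)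
  non i hi := h.non i (by omega)

theorem OP.extend {V : Type*} {D : Dag V} {S : Set V} {x u v : V} {n : ℕ} {f : ℕ → V}
    (h : D.OP S x u n f) (ha : D.Adj u v) (hv : ∀ m ≤ n, f m ≠ v)
    (hc : ∀ k, n = k + 1 → D.edge (f k) u → D.edge v u → D.AnS S u)
    (hn : ∀ k, n = k + 1 → ¬ (D.edge (f k) u ∧ D.edge v u) → u ∉ S) :
    D.OP S x v (n + 1) (fun i => if i ≤ n then f i else v) where
  first := by simp [h.first]
  last := by simp
  inj i j hi hj := by
    have h1 := h.inj i j
    have h2 := hv i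
    have h3 := hv j
    grind
  adj i hi := by
    by_cases hin : i = n
    · subst hin; simpa [h.last] using ha
    · have h1 : i ≤ n := by omega
      have h2 : i + 1 ≤ n := by omega
      simpa [h1, h2] using h.adj i (by omega)
  col i hi := by
    have h1 : i ≤ n := by omega
    have h2 : i + 1 ≤ n := by omega
    by_cases hin : i + 1 = n
    · subst hin
      simpa [h.last] using hc i rfl
    · have h3 : i + 2 ≤ n := by omega
      simpa [h1, h2, h3] using h.col i h3
  non i hi := by
    have h1 : i ≤ n := by omega
    have h2 : i + 1 ≤ n := by omega
    by_cases hin : i + 1 = n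
    · subst hin
      simpa [h.last] using hn i rfl
    · have h3 : i + 2 ≤ n := by omega
      simpa [h1, h2, h3] using h.non i h3

theorem OP.fwd {V : Type*} {D : Dag V} {S : Set V} {x v : V} {n : ℕ} {f : ℕ → V}
    (h : D.OP S x v n f) (m k : ℕ) (hn : n = k + 1) (hm : m < n)
    (he : D.edge (f m) (f (m + 1))) (hl : D.edge (f (k + 1)) (f k)) : D.AnS S (f m) := by
  have key : ∀ j, m + j + 1 ≤ n → D.AnS S (f m) ∨
      (D.Anc (f m) (f (m + j + 1)) ∧ D.edge (f (m + j)) (f (m + j + 1))) := by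
    intro j
    induction j with
    | zero => exact fun _ => .inr ⟨.single he, he⟩
    | succ j ih =>
      intro hj
      rcases ih (by omega) with ih | ⟨i1, i2⟩
      · exact .inl ih
      · rcases h.adj (m + j + 1) (by omega) with ha | ha
        · exact .inr ⟨Relation.ReflTransGen.tail i1 ha, ha⟩
        · obtain ⟨d, d1, d2⟩ := h.col (m + j) (by omega) i2 ha
          exact .inl ⟨d, Relation.ReflTransGen.trans i1 d1, d2⟩
  obtain ⟨j, rfl⟩ : ∃ j, k = m + j := ⟨k - m, by omega⟩
  rcases key j (by omega) with h | h
  · exact h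
  · exact absurd hl (D.edge_asymm h.2)

/-- The path can be continued by an edge into its last node. -/
def Ext {V : Type*} (D : Dag V) (S : Set V) (v : V) (n : ℕ) (f : ℕ → V) : Prop :=
  n = 0 ∨ ∃ k, n = k + 1 ∧ ((D.edge (f k) v ∧ D.AnS S v) ∨ (D.edge v (f k) ∧ v ∉ S))

/-- Invariant turning walks into paths. -/
def JP {V : Type*} (D : Dag V) (S : Set V) (x : V) (s : St) (v : V) : Prop :=
  ∃ n f, D.OP S x v n f ∧ match s with
    | .T => v ∈ S → D.Ext S v n f
    | .F => v ∉ S → D.Ext S v n f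
    | .Out => n = 0 ∨ v ∉ S
    | .In => D.Ext S v n f

theorem R_JP {V : Type*} {D : Dag V} {S : Set V} {x : V} {s : St} {v : V}
    (h : D.R S x s v) : D.JP S x s v := by
  have h0 : D.OP S x x 0 (fun _ => x) :=
    ⟨rfl, rfl, fun i j hi hj _ => by omega, fun i hi => by omega, fun i hi => by omega,
      fun i hi => by omega⟩
  induction h with
  | startOut => exact ⟨0, _, h0, .inl rfl⟩
  | startIn => exact ⟨0, _, h0, .inl rfl⟩
  | @goOut u v _ he ih =>
    obtain ⟨n, f, hp, hx⟩ := ih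
    by_cases hv : ∃ m ≤ n, f m = v
    · obtain ⟨m, hm, rfl⟩ := hv
      refine ⟨m, f, hp.trunc m hm, fun hS => ?_⟩
      rcases m with _ | k
      · exact .inl rfl
      · have hne : k + 1 ≠ n := by
          rintro rfl
          rw [hp.last] at he
          exact D.edge_irrefl he
        refine .inr ⟨k, rfl, .inl ⟨?_, _, .refl, hS⟩⟩
        by_contra hn
        exact hp.non k (by omega) (fun h => hn h.1) hS
    · push Not at hv
      refine ⟨n + 1, _, hp.extend (.inl he) hv (fun k _ _ h => absurd h (D.edge_asymm he)) ?_, ?_⟩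
      · intro k hk _
        rcases hx with hx | hx
        · omega
        · exact hx
      · intro hS
        refine .inr ⟨n, rfl, .inl ⟨?_, _, .refl, hS⟩⟩
        simpa [hp.last] using he
  | @goIn u v _ he ih =>
    obtain ⟨n, f, hp, hx⟩ := ih
    by_cases hv : ∃ m ≤ n, f m = v
    · obtain ⟨m, hm, rfl⟩ := hv
      refine ⟨m, f, hp.trunc m hm, fun hS => ?_⟩
      have hne : m ≠ n := by
        rintro rfl
        rw [hp.last] at he
        exact D.edge_irrefl he
      rcases m with _ | k
      · exact .inl rfl
      · refine .inr ⟨k, rfl, ?_⟩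
        rcases hp.adj k (by omega) with ha | ha
        · refine .inl ⟨ha, ?_⟩
          rcases hx with hx | ⟨l, hl, ⟨_, d, d1, d2⟩ | ⟨h1, _⟩⟩
          · omega
          · exact ⟨d, Relation.ReflTransGen.head he d1, d2⟩
          · rcases hp.adj (k + 1) (by omega) with hb | hb
            · refine hp.fwd (k + 1) l hl (by omega) hb ?_
              rw [← hl, hp.last]
              exact h1
            · exact hp.col k (by omega) ha hb
        · exact .inr ⟨ha, hS⟩
    · push Not at hv
      refine ⟨n + 1, _, hp.extend (.inr he) hv ?_ ?_, ?_⟩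
      · intro k hk h1 _
        rcases hx with hx | ⟨l, hl, h2 | h2⟩
        · omega
        · exact h2.2
        · obtain rfl : l = k := by omega
          exact absurd h1 (D.edge_asymm h2.1)
      · intro k hk h1
        rcases hx with hx | ⟨l, hl, h2 | h2⟩
        · omega
        · obtain rfl : l = k := by omega
          exact absurd ⟨h2.1, he⟩ h1
        · exact h2.2
      · intro hS
        refine .inr ⟨n, rfl, .inr ⟨?_, hS⟩⟩
        simpa [hp.last] using he
  | tOut _ hS ih =>
    obtain ⟨n, f, hp, _⟩ := ih
    exact ⟨n, f, hp, .inr hS⟩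
  | tIn _ hS ih =>
    obtain ⟨n, f, hp, hx⟩ := ih
    exact ⟨n, f, hp, hx hS⟩
  | fOut _ hS ih =>
    obtain ⟨n, f, hp, _⟩ := ih
    exact ⟨n, f, hp, .inr hS⟩
  | fIn _ hS ih =>
    obtain ⟨n, f, hp, hx⟩ := ih
    exact ⟨n, f, hp, hx hS⟩

theorem dSep_iff {V : Type*} (D : Dag V) (S : Set V) (x y : V) :
    D.dSep x y S ↔ ¬ D.Con S x y := by
  constructor
  · rintro hd (rfl | h | h)
    · have h0 : D.OP S x x 0 (fun _ => x) :=
        ⟨rfl, rfl, fun i j hi hj _ => by omega, fun i hi => by omega, fun i hi => by omega,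
          fun i hi => by omega⟩
      exact h0.not_dSep hd
    · obtain ⟨n, f, hp, _⟩ := R_JP h
      exact hp.not_dSep hd
    · obtain ⟨n, f, hp, _⟩ := R_JP h
      exact hp.not_dSep hd
  · intro h
    by_contra hd
    obtain ⟨n, f, hp⟩ := exists_op hd
    exact h hp.con

theorem mequiv_iff {V : Type*} (D D' : Dag V) :
    D.MEquiv D' ↔ ∀ S x y, D.Con S x y ↔ D'.Con S x y := by
  constructor
  · intro h S x y
    have := h x y S
    rw [dSep_iff, dSep_iff] at this
    exact not_iff_not.1 this
  · intro h x y S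
    rw [dSep_iff, dSep_iff, h S x y]

theorem con_of_adj {V : Type*} {D : Dag V} {S : Set V} {x y : V} (h : D.Adj x y) :
    D.Con S x y := by
  rcases h with h | h
  · exact .inr (.inl (.goOut .startOut h))
  · exact .inr (.inr (.goIn .startIn h))

theorem not_con_pa {V : Type*} {D : Dag V} {x y : V} (hne : x ≠ y) (hn : ¬ D.Adj x y)
    (ha : ¬ D.Anc x y) : ¬ D.Con (D.Pa x) x y := by
  have key : ∀ s v, D.R (D.Pa x) x s v → match s with
      | .T => D.Anc x v
      | .F => D.edge v x
      | .Out => D.Anc x v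
      | .In => v = x := by
    intro s v h
    induction h with
    | startOut => exact Relation.ReflTransGen.refl
    | startIn => rfl
    | goOut _ he ih => exact Relation.ReflTransGen.tail ih he
    | goIn _ he ih =>
      have ih' := ih
      simp only at ih'
      subst ih'
      exact he
    | tOut _ _ ih => exact ih
    | tIn _ hS ih => exact absurd ih (D.acyclic _ _ hS)
    | fOut _ hS ih => exact absurd ih hS
    | fIn _ hS ih => exact absurd ih hS
  rintro (h | h | h)
  · exact hne h
  · exact ha (key _ _ h)
  · exact hn (.inr (key _ _ h))

theorem exists_sep {V : Type*} {D : Dag V} {x y : V} (hne : x ≠ y) (hn : ¬ D.Adj x y) :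
    ∃ S, ¬ D.Con S x y ∨ ¬ D.Con S y x := by
  by_cases ha : D.Anc x y
  · have ha' : ¬ D.Anc y x := by
      intro h
      rcases Relation.ReflTransGen.cases_head ha with h1 | ⟨z, h1, h2⟩
      · exact hne h1
      · exact D.acyclic x z h1 (Relation.ReflTransGen.trans h2 h)
    exact ⟨_, .inr (not_con_pa hne.symm (fun h => hn (D.adj_comm.1 h)) ha')⟩
  · exact ⟨_, .inl (not_con_pa hne hn ha)⟩

theorem adj_of_con {V : Type*} {D D' : Dag V} (h : ∀ S x y, D.Con S x y ↔ D'.Con S x y) {x y : V}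
    (ha : D.Adj x y) : D'.Adj x y := by
  by_contra hn
  have hne : x ≠ y := by
    rintro rfl
    rcases ha with h | h <;> exact D.edge_irrefl h
  obtain ⟨S, hS | hS⟩ := exists_sep hne hn
  · exact hS ((h S x y).1 (con_of_adj ha))
  · exact hS ((h S y x).1 (con_of_adj (D.adj_comm.1 ha)))

theorem vs_of_sep {V : Type*} {D D' : Dag V} (h : ∀ S x y, D.Con S x y ↔ D'.Con S x y)
    {a b c : V} {S : Set V} (hab : D.edge a b) (hcb : D.edge c b) (hS : ¬ D'.Con S a c) :
    D'.edge a b ∧ D'.edge c b := by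
  have h1 : D'.Adj a b := adj_of_con h (.inl hab)
  have h2 : D'.Adj c b := adj_of_con h (.inl hcb)
  have hbS : b ∉ S := fun hb =>
    hS ((h S a c).1 (.inr (.inr (.goIn (.tIn (.goOut .startOut hab) hb) hcb))))
  rcases h1 with h1 | h1
  · rcases h2 with h2 | h2
    · exact ⟨h1, h2⟩
    · exact absurd (.inr (.inl (.goOut (.tOut (.goOut .startOut h1) hbS) h2))) hS
  · rcases h2 with h2 | h2
    · exact absurd (.inr (.inr (.goIn (.fIn (.goIn .startIn h1) hbS) h2))) hS
    · exact absurd (.inr (.inl (.goOut (.fOut (.goIn .startIn h1) hbS) h2))) hS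

theorem vs_of_con {V : Type*} {D D' : Dag V} (h : ∀ S x y, D.Con S x y ↔ D'.Con S x y)
    {a b c : V} (hne : a ≠ c) (hn : ¬ D.Adj a c) (hab : D.edge a b) (hcb : D.edge c b) :
    D'.edge a b ∧ D'.edge c b := by
  have hn' : ¬ D'.Adj a c := fun h' => hn (adj_of_con (fun S x y => (h S x y).symm) h')
  obtain ⟨S, hS | hS⟩ := exists_sep hne hn'
  · exact vs_of_sep h hab hcb hS
  · exact (vs_of_sep h hcb hab hS).symm

theorem mequiv_iff_sv {V : Type*} [Finite V] (D D' : Dag V) : D.MEquiv D' ↔ D.SV D' := by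
  rw [mequiv_iff]
  constructor
  · intro h
    have h' : ∀ S x y, D'.Con S x y ↔ D.Con S x y := fun S x y => (h S x y).symm
    refine ⟨fun a b => ⟨adj_of_con h, adj_of_con h'⟩, fun a b c hne hn => ⟨fun k => ?_, fun k => ?_⟩⟩
    · exact vs_of_con h hne hn k.1 k.2
    · exact vs_of_con h' hne (fun k => hn (adj_of_con h' k)) k.1 k.2
  · exact fun h S x y => con_of_sv D D' h S x y

theorem cpDir_iff {V : Type*} [Finite V] (D : Dag V) (a b : V) : D.CpDir a b ↔ D.C a b := by
  constructor
  · intro h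
    by_contra hn
    obtain ⟨D', h1, h2⟩ := D.exists_reorient a b hn
    exact h2 (h D' ((mequiv_iff_sv D D').2 h1))
  · exact fun h D' hD => h.sound ((mequiv_iff_sv D D').1 hD)

theorem not_possAn {V : Type*} [Finite V] (D : Dag V) (X Y : V) (h : D.CpDir Y X) :
    ¬ D.PossAn X Y := by
  rintro ⟨p, hp⟩
  rw [cpDir_iff] at h
  have key : ∀ k (hk : k < p.n + 1), Relation.TransGen D.C Y (p.f ⟨k, hk⟩) := by
    intro k
    induction k with
    | zero => intro hk; rw [p.first]; exact .single h
    | succ k ih =>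
      intro hk
      have i1 := ih (by omega)
      have ha : D.Adj (p.f ⟨k, by omega⟩) (p.f ⟨k + 1, hk⟩) := p.adj ⟨k, by omega⟩
      have hb : ¬ D.CpDir (p.f ⟨k + 1, hk⟩) (p.f ⟨k, by omega⟩) := hp ⟨k, by omega⟩
      rw [cpDir_iff] at hb
      by_cases hc : D.C (p.f ⟨k, by omega⟩) (p.f ⟨k + 1, hk⟩)
      · exact i1.tail hc
      · obtain ⟨w, hw1, hw2⟩ := Relation.TransGen.tail'_iff.1 i1
        exact Relation.TransGen.tail'_iff.2 ⟨w, hw1, hw2.chain ⟨ha, hc, hb⟩⟩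
  have h1 := key p.n (by omega)
  rw [p.last] at h1
  have h2 : Relation.TransGen D.edge Y Y :=
    Relation.TransGen.mono (fun _ _ h => C.edge h) _ _ h1
  obtain ⟨b, k1, k2⟩ := Relation.TransGen.head'_iff.1 h2
  exact D.acyclic Y b k1 k2

end Dag


/-- For distinct adjacent `X`, `Y` in the CPDAG `G` of the MEC of a DAG:
if `Y ∈ Pa_G(X)` then `X` is not a possible ancestor of `Y` in `G`; consequently,
`X` is a possible ancestor of `Y` iff `Y ∈ Ch_G(X) ∪ Sib_G(X)`. -/
theorem possAn_adjacent_iff_child_or_sibling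
    {V : Type*} [Fintype V] (D : Dag V) (X Y : V) (hXY : X ≠ Y)
    (hadj : D.Adj X Y) :
    (Y ∈ D.CpPa X → ¬ D.PossAn X Y) ∧
      (D.PossAn X Y ↔ Y ∈ D.CpCh X ∪ D.CpSib X) := by
  refine ⟨fun h => D.not_possAn X Y h, fun h => ?_, fun h => ?_⟩
  · have h1 : ¬ D.CpDir Y X := fun h' => D.not_possAn X Y h' h
    by_cases h2 : D.CpDir X Y
    · exact .inl h2
    · exact .inr ⟨hadj, h2, h1⟩
  · have h1 : ¬ D.CpDir Y X := by
      rcases h with h | h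
      · intro h'
        exact D.edge_asymm (h D fun _ _ _ => Iff.rfl) (h' D fun _ _ _ => Iff.rfl)
      · exact h.2.2
    refine ⟨⟨1, ![X, Y], ?_, rfl, rfl, ?_⟩, ?_⟩
    · intro i j hij
      fin_cases i <;> fin_cases j <;> simp_all
    · intro i
      fin_cases i
      exact hadj
    · intro i
      have hi : i = (⟨0, by exact Nat.one_pos⟩ : Fin 1) := Subsingleton.elim (α := Fin 1) _ _
      subst hi
      exact h1
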